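/- arXiv:2208.05353 — 4 statements merged into one kernel-verified Lean document; each statement's English description precedes it below -/
import Mathlib

section
/- Let C1, C2 ≤ F_q^n be linear codes with C2^⊥ ≤ C1, and fix coordinate i = n. If every word of π_n(C1) \ (σ_n(C2))^⊥ has weight ≥ some value whenever every word of C1 \ C2^⊥ has weight ≥ d1, then precisely: every word of π_n(C1) \ (σ_n(C2))^⊥ has Hamming weight at least d1 − 1, where d1 = min{wgt(v) : v ∈ C1 \ C2^⊥}. -/
/-!
A word `w` of the punctured code is the puncture of some `v ∈ C1`. Puncturing commutes with pairing
against words that vanish at the deleted coordinate, so the puncture of a word of `C2^⊥` lies in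
`(σ C2)^⊥` (`punctureAt_dualCode_le`). If `w ∉ (σ C2)^⊥`, then `v ∈ C1 \ C2^⊥`, hence `v` has weight
at least `d1`, and deleting a coordinate lowers the weight by at most one
(`hammingNorm_le_comp_succAbove_add_one`).
-/

open Finset

variable {F : Type*} [Field F]

/-- Puncturing at coordinate `i`: delete coordinate `i` from every codeword. -/
def punctureAt {n : ℕ} (i : Fin (n + 1)) (C : Submodule F (Fin (n + 1) → F)) :
    Submodule F (Fin n → F) :=
  Submodule.map (LinearMap.funLeft F F i.succAbove) C

/-- Shortening at coordinate `i`: keep codewords vanishing at `i`, delete coordinate `i`. -/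
def shortenAt {n : ℕ} (i : Fin (n + 1)) (C : Submodule F (Fin (n + 1) → F)) :
    Submodule F (Fin n → F) :=
  Submodule.map (LinearMap.funLeft F F i.succAbove)
    (C ⊓ LinearMap.ker (LinearMap.proj i : (Fin (n + 1) → F) →ₗ[F] F))

/-- Euclidean dual code w.r.t. the standard bilinear form. -/
def dualCode {n : ℕ} (C : Submodule F (Fin n → F)) : Submodule F (Fin n → F) where
  carrier := {v | ∀ c ∈ C, ∑ j, v j * c j = 0}
  add_mem' := by
    intro a b ha hb c hc
    simp only [Set.mem_setOf_eq] at *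
    simp [Pi.add_apply, add_mul, Finset.sum_add_distrib, ha c hc, hb c hc]
  zero_mem' := by intro c hc; simp
  smul_mem' := by
    intro r a ha c hc
    simp only [Set.mem_setOf_eq, Pi.smul_apply, smul_eq_mul, mul_assoc, ← Finset.mul_sum] at *
    rw [ha c hc, mul_zero]

theorem punctureAt_dualCode_le {F : Type*} [Field F] {n : ℕ} (i : Fin (n + 1))
    (C : Submodule F (Fin (n + 1) → F)) :
    punctureAt i (dualCode C) ≤ dualCode (shortenAt i C) := by
  rintro _ ⟨v, hv, rfl⟩ _ ⟨c, ⟨hc, hci⟩, rfl⟩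
  have hci' : c i = 0 := hci
  have h := hv c hc
  rw [Fin.sum_univ_succAbove _ i, hci', mul_zero, zero_add] at h
  exact h

theorem hammingNorm_le_comp_succAbove_add_one {F : Type*} [Field F] [DecidableEq F] {n : ℕ}
    (i : Fin (n + 1)) (v : Fin (n + 1) → F) :
    hammingNorm v ≤ hammingNorm (v ∘ i.succAbove) + 1 := by
  simp only [hammingNorm, Finset.card_filter, Function.comp_apply]
  rw [Fin.sum_univ_succAbove _ i]
  split_ifs <;> omega

variable [Fintype F] [DecidableEq F]

/-- every word of `π_n(C1) \ (σ_n(C2))^⊥` has weight at least `d1 - 1`,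
where `d1 = min{wgt v : v ∈ C1 \ C2^⊥}`. -/
theorem punctured_relative_distance {n d1 : ℕ} (C1 C2 : Submodule F (Fin (n + 1) → F))
    (hcss : dualCode C2 ≤ C1) (hne : dualCode C2 ≠ C1)
    (hd1 : IsLeast (hammingNorm '' {v | v ∈ C1 ∧ v ∉ dualCode C2}) d1) :
    ∀ w ∈ punctureAt (Fin.last n) C1, w ∉ dualCode (shortenAt (Fin.last n) C2) →
      d1 - 1 ≤ hammingNorm w := by
  rintro _ ⟨v, hv, rfl⟩ hw
  have hv2 : v ∉ dualCode C2 := fun h =>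
    hw (punctureAt_dualCode_le (Fin.last n) C2 (Submodule.mem_map_of_mem h))
  have h1 : d1 ≤ hammingNorm v := hd1.2 ⟨v, ⟨hv, hv2⟩, rfl⟩
  have h2 := hammingNorm_le_comp_succAbove_add_one (Fin.last n) v
  exact Nat.sub_le_of_le_add (h1.trans h2)
end

section
/- Let C1, C2 ≤ F_q^n be linear codes with C2^⊥ ≤ C1 and C1^⊥ ≤ C2, and let d2 = min{wgt(u) : u ∈ C2 \ C1^⊥}. Then every word of σ_n(C2) \ (π_n(C1))^⊥ has Hamming weight at least d2. -/
/-! A word of the shortened code is a codeword `w` of `C2` with `w (Fin.last n) = 0`, restricted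
to the other coordinates. Since the deleted entry is zero, the restriction changes neither the
Hamming weight nor the pairing with any word `c`, whatever the last entry of `c`. Hence if `w` were
in the dual of `C1`, its restriction would be in the dual of the punctured `C1`; so `w` is one of the
words over which the minimum `d2` is taken. -/

open Finset

variable {F : Type*} [Field F]

variable [Fintype F] [DecidableEq F]

/-- every word of `σ_n(C2) \ (π_n(C1))^⊥` has weight at least `d2`,
where `d2 = min{wgt u : u ∈ C2 \ C1^⊥}`. -/
theorem shortened_relative_distance {n d2 : ℕ} (C1 C2 : Submodule F (Fin (n + 1) → F))
    (hcss : dualCode C2 ≤ C1) (hcss' : dualCode C1 ≤ C2)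
    (hd2 : IsLeast (hammingNorm '' {u | u ∈ C2 ∧ u ∉ dualCode C1}) d2) :
    ∀ u ∈ shortenAt (Fin.last n) C2, u ∉ dualCode (punctureAt (Fin.last n) C1) →
      d2 ≤ hammingNorm u := by
  rintro _ ⟨w, ⟨hw, hw0⟩, rfl⟩ hu
  have hw0 : w (Fin.last n) = 0 := hw0
  have hnorm : hammingNorm (LinearMap.funLeft F F (Fin.last n).succAbove w) = hammingNorm w := by
    simp only [hammingNorm, Finset.card_filter, LinearMap.funLeft_apply]
    rw [Fin.sum_univ_succAbove _ (Fin.last n)]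
    simp only [hw0, ne_eq, not_true_eq_false, if_false, zero_add]
    exact Finset.card_filter _ _
  rw [hnorm]
  refine hd2.2 ⟨w, ⟨hw, fun hdual => hu ?_⟩, rfl⟩
  rintro _ ⟨c, hc, rfl⟩
  have hsum := hdual c hc
  rw [Fin.sum_univ_succAbove _ (Fin.last n), hw0, zero_mul, zero_add] at hsum
  exact hsum
end

section
/- Let C1 = [n,k1]_q and C2 = [n,k2]_q be linear codes with C2^⊥ ≤ C1, and fix a coordinate i. If coordinate i of C2 is identically zero, then dim σ_i(C2) = k2 and C2^⊥ contains a word of weight 1 supported at position i, so if additionally C1 contains that weight-1 word, dim π_i(C1) = k1 − 1; hence dim π_i(C1) + dim σ_i(C2) − (n−1) = k1 + k2 − n. -/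
/-!
Deleting coordinate `i` is a linear map whose kernel is the line spanned by the unit vector
`e_i` (`funLeft_succAbove_eq_zero_iff`). It is therefore injective on words vanishing at `i`, and
every word of `C2` vanishes at `i`, so shortening keeps the dimension of `C2`. For the same reason
`e_i` is orthogonal to `C2`, so `e_i ∈ dualCode C2 ≤ C1`; the line `F ∙ e_i` lies in `C1`, and
rank-nullity for puncturing on `C1` loses exactly one dimension. In particular `1 ≤ k1`, so the
truncated subtractions in the dimension count cause no discrepancy.
-/

open Finset

variable {F : Type*} [Field F]

lemma funLeft_succAbove_eq_zero_iff {n : ℕ} (i : Fin (n + 1)) (v : Fin (n + 1) → F) :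
    LinearMap.funLeft F F i.succAbove v = 0 ↔ v ∈ Submodule.span F {Pi.single i (1 : F)} := by
  rw [Submodule.mem_span_singleton]
  constructor
  · intro h
    refine ⟨v i, funext fun j => ?_⟩
    rcases Fin.eq_self_or_eq_succAbove i j with rfl | ⟨k, rfl⟩
    · simp
    · have hk : v (i.succAbove k) = 0 := congrFun h k
      simp [hk]
  · rintro ⟨a, rfl⟩
    funext k
    simp [LinearMap.funLeft_apply]

lemma finrank_shortenAt_of_zero {n : ℕ} (i : Fin (n + 1)) (C : Submodule F (Fin (n + 1) → F))
    (hz : ∀ c ∈ C, c i = 0) : Module.finrank F ↥(shortenAt i C) = Module.finrank F ↥C := by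
  have hC : C ⊓ LinearMap.ker (LinearMap.proj i : (Fin (n + 1) → F) →ₗ[F] F) = C :=
    inf_eq_left.mpr fun c hc => hz c hc
  rw [shortenAt, hC, ← LinearMap.range_domRestrict]
  refine LinearMap.finrank_range_of_inj ((injective_iff_map_eq_zero _).mpr ?_)
  rintro ⟨c, hc⟩ h
  obtain ⟨a, rfl⟩ := Submodule.mem_span_singleton.mp ((funLeft_succAbove_eq_zero_iff i c).mp h)
  have ha : a = 0 := by simpa using hz _ hc
  simp [ha]

lemma finrank_punctureAt_of_single_mem {n : ℕ} (i : Fin (n + 1))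
    (C : Submodule F (Fin (n + 1) → F)) (h : Pi.single i (1 : F) ∈ C) :
    Module.finrank F ↥(punctureAt i C) + 1 = Module.finrank F ↥C := by
  let f := (LinearMap.funLeft F F i.succAbove).domRestrict C
  have hker : LinearMap.ker f = Submodule.span F {(⟨Pi.single i 1, h⟩ : C)} := by
    ext ⟨c, hc⟩
    rw [LinearMap.mem_ker, LinearMap.domRestrict_apply, funLeft_succAbove_eq_zero_iff]
    simp [Submodule.mem_span_singleton, Subtype.ext_iff]
  have hne : (⟨Pi.single i 1, h⟩ : C) ≠ 0 := by
    simp [Subtype.ext_iff]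
  rw [← LinearMap.finrank_range_add_finrank_ker f, hker, finrank_span_singleton hne,
    LinearMap.range_domRestrict, punctureAt]

lemma single_mem_dualCode {n : ℕ} (i : Fin n) (C : Submodule F (Fin n → F))
    (hz : ∀ c ∈ C, c i = 0) : Pi.single i (1 : F) ∈ dualCode C := by
  intro c hc
  simp [Pi.single_apply, hz c hc]

variable [Fintype F] [DecidableEq F]

/-- CSS dimension count, case (i): coordinate `i` of `C2` identically zero. -/
theorem css_dimension_case_zero_column {n k1 k2 : ℕ}
    (C1 C2 : Submodule F (Fin (n + 1) → F)) (i : Fin (n + 1))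
    (hcss : dualCode C2 ≤ C1)
    (hk1 : Module.finrank F ↥C1 = k1) (hk2 : Module.finrank F ↥C2 = k2)
    (hz : ∀ c ∈ C2, c i = 0) :
    Module.finrank F ↥(shortenAt i C2) = k2 ∧
    (∃ w ∈ dualCode C2, hammingNorm w = 1 ∧ w i ≠ 0) ∧
    Module.finrank F ↥(punctureAt i C1) = k1 - 1 ∧
    Module.finrank F ↥(punctureAt i C1) + Module.finrank F ↥(shortenAt i C2) - n =
      k1 + k2 - (n + 1) := by
  have hmem := single_mem_dualCode i C2 hz
  have hs := finrank_shortenAt_of_zero i C2 hz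
  have hp := finrank_punctureAt_of_single_mem i C1 (hcss hmem)
  refine ⟨hs.trans hk2, ⟨_, hmem, ?_, by simp⟩, by omega, by omega⟩
  simp [hammingNorm, Pi.single_apply, Finset.filter_eq']
end

section
/- Puncturing a general quantum code: if C1, C2 ≤ F_q^n satisfy C2^⊥ ≤ C1 with relative distances d1 > 1 and d2 > 1, then iterating the shorten/puncture operation m times (m ≤ min(d1,d2)−1), alternating which code is punctured, yields codes C1'', C2'' of length n − 2m with (C2'')^⊥ ≤ C1'', preserved CSS dimension k, and relative distances at least d1 − m and d2 − m respectively. -/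
/-!
A CSS pair `(C1, C2)` is described by the nested codes `E ≤ C` with `C = C1` and `E = C2ᗮ`, so that
`k = dim C - dim E` and the two distances are the least weights in `C \ E` and in `Eᗮ \ Cᗮ`.
Puncturing both `C` and `E` at one coordinate punctures `C1` and shortens `C2`, because the dual of
a punctured code is the shortened dual (`dualCode_punctureAt`). This lowers the first distance by
at most one and leaves the bound on the second one intact. The dimension `k` is preserved: a word of
`C` killed by the puncturing has weight at most one, so when the first distance exceeds one it lies
in `E`, and puncturing has the same kernel on `C` as on `E`.

Passing from `E ≤ C` to `Cᗮ ≤ Eᗮ` exchanges the roles of `C1` and `C2`, so two consecutive steps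
lower the length by two and each distance by one; `m` such double steps give the theorem.
-/

open Finset

variable {F : Type*} [Field F]

variable [Fintype F] [DecidableEq F]


section

variable {K : Type*} [Field K]

lemma mem_dualCode {n : ℕ} {C : Submodule K (Fin n → K)} {v : Fin n → K} :
    v ∈ dualCode C ↔ ∀ c ∈ C, ∑ j, v j * c j = 0 := Iff.rfl

lemma dualCode_anti {n : ℕ} {C D : Submodule K (Fin n → K)} (h : C ≤ D) :
    dualCode D ≤ dualCode C := fun _ hv c hc => hv c (h hc)

lemma dotProductBilin_nondegenerate (n : ℕ) :
    (dotProductBilin K K : LinearMap.BilinForm K (Fin n → K)).Nondegenerate :=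
  ⟨fun _ h => dotProduct_eq_zero _ h,
    fun _ h => dotProduct_eq_zero _ fun w => (dotProduct_comm _ _).trans (h w)⟩

lemma dualCode_eq_orthogonal {n : ℕ} (C : Submodule K (Fin n → K)) :
    dualCode C = LinearMap.BilinForm.orthogonal (dotProductBilin K K) C := by
  ext v
  rw [mem_dualCode, LinearMap.BilinForm.mem_orthogonal_iff]
  refine forall₂_congr fun c _ => ?_
  change _ ↔ c ⬝ᵥ v = 0
  rw [dotProduct_comm]
  rfl

lemma dualCode_dualCode {n : ℕ} (C : Submodule K (Fin n → K)) : dualCode (dualCode C) = C := by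
  rw [dualCode_eq_orthogonal, dualCode_eq_orthogonal]
  refine LinearMap.BilinForm.orthogonal_orthogonal (dotProductBilin_nondegenerate n) ?_ C
  intro v w h
  exact (dotProduct_comm w v).trans h

lemma finrank_dualCode {n : ℕ} (C : Submodule K (Fin n → K)) :
    Module.finrank K (dualCode C) + Module.finrank K C = n := by
  have h := LinearMap.BilinForm.finrank_orthogonal (dotProductBilin_nondegenerate (K := K) n) C
  have h' := Submodule.finrank_le C
  rw [← dualCode_eq_orthogonal] at h
  rw [Module.finrank_fin_fun] at h h'
  omega

lemma dualCode_punctureAt {n : ℕ} (i : Fin (n + 1)) (C : Submodule K (Fin (n + 1) → K)) :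
    dualCode (punctureAt i C) = shortenAt i (dualCode C) := by
  ext v
  simp only [mem_dualCode, punctureAt, shortenAt, Submodule.mem_map, Submodule.mem_inf,
    LinearMap.mem_ker, LinearMap.proj_apply, forall_exists_index, and_imp,
    forall_apply_eq_imp_iff₂, LinearMap.funLeft_apply]
  constructor
  · intro h
    refine ⟨i.insertNth 0 v, ⟨fun c hc => ?_, by simp⟩, ?_⟩
    · simpa [Fin.sum_univ_succAbove _ i] using h c hc
    · ext j
      simp [LinearMap.funLeft_apply]
  · rintro ⟨w, ⟨hw, hwi⟩, rfl⟩ c hc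
    simpa [Fin.sum_univ_succAbove _ i, hwi, LinearMap.funLeft_apply] using hw c hc

lemma hammingNorm_succAbove [DecidableEq K] {n : ℕ} (i : Fin (n + 1))
    (v : Fin (n + 1) → K) :
    hammingNorm v =
      (if v i ≠ 0 then 1 else 0) + hammingNorm (LinearMap.funLeft K K i.succAbove v) := by
  simp only [hammingNorm, Finset.card_filter]
  rw [Fin.sum_univ_succAbove _ i]
  rfl

lemma finrank_map_add_finrank_inf_ker {V W : Type*} [AddCommGroup V] [Module K V]
    [FiniteDimensional K V] [AddCommGroup W] [Module K W] (f : V →ₗ[K] W) (C : Submodule K V) :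
    Module.finrank K (C.map f) + Module.finrank K (C ⊓ LinearMap.ker f : Submodule K V) =
      Module.finrank K C := by
  have h := (f.domRestrict C).finrank_range_add_finrank_ker
  rw [LinearMap.range_domRestrict, LinearMap.ker_domRestrict] at h
  rw [← h, ← Submodule.map_comap_subtype, Submodule.finrank_map_subtype_eq]

/-- The nested pair `E ≤ C` encodes the CSS code with `C1 = C` and `C2 = dualCode E`: it has CSS
dimension `k`, and `a`, `b` are lower bounds for its two relative distances. -/
structure IsCSSPair [DecidableEq K] {n : ℕ} (k a b : ℕ)
    (C E : Submodule K (Fin n → K)) : Prop where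
  le : E ≤ C
  finrank_eq : Module.finrank K C = Module.finrank K E + k
  le_norm : ∀ v ∈ C, v ∉ E → a ≤ hammingNorm v
  le_norm_dual : ∀ v ∈ dualCode E, v ∉ dualCode C → b ≤ hammingNorm v

/-- Exchanging the two codes `C1` and `C2` of a CSS pair. -/
lemma IsCSSPair.dual [DecidableEq K] {n k a b : ℕ}
    {C E : Submodule K (Fin n → K)} (h : IsCSSPair k a b C E) :
    IsCSSPair k b a (dualCode E) (dualCode C) where
  le := dualCode_anti h.le
  finrank_eq := by
    have := finrank_dualCode C
    have := finrank_dualCode E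
    have := h.finrank_eq
    omega
  le_norm := h.le_norm_dual
  le_norm_dual := by simpa only [dualCode_dualCode] using h.le_norm

/-- Puncturing `C1` and shortening `C2` at one coordinate costs one unit of the first distance only.
The hypothesis `1 ≤ a` is what keeps `k` unchanged: it forces words of `C` of weight one into `E`. -/
lemma IsCSSPair.puncture [DecidableEq K] {n k a b : ℕ}
    {C E : Submodule K (Fin (n + 1) → K)} (h : IsCSSPair k (a + 1) b C E) (ha : 1 ≤ a)
    (i : Fin (n + 1)) : IsCSSPair k a b (punctureAt i C) (punctureAt i E) where
  le := Submodule.map_mono h.le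
  finrank_eq := by
    have hker : C ⊓ LinearMap.ker (LinearMap.funLeft K K i.succAbove) =
        E ⊓ LinearMap.ker (LinearMap.funLeft K K i.succAbove) := by
      refine le_antisymm (fun v hv => ⟨?_, hv.2⟩) (inf_le_inf_right _ h.le)
      by_contra hvE
      have h1 := h.le_norm v hv.1 hvE
      rw [hammingNorm_succAbove i, LinearMap.mem_ker.1 hv.2, hammingNorm_zero] at h1
      split_ifs at h1 <;> omega
    have h1 := finrank_map_add_finrank_inf_ker (LinearMap.funLeft K K i.succAbove) C
    have h2 := finrank_map_add_finrank_inf_ker (LinearMap.funLeft K K i.succAbove) E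
    have h3 := h.finrank_eq
    rw [hker] at h1
    unfold punctureAt
    omega
  le_norm := by
    rintro _ ⟨c, hc, rfl⟩ hcE
    have h1 := h.le_norm c hc fun hE => hcE ⟨c, hE, rfl⟩
    rw [hammingNorm_succAbove i] at h1
    split_ifs at h1 <;> omega
  le_norm_dual := by
    rw [dualCode_punctureAt, dualCode_punctureAt]
    rintro _ ⟨c, ⟨hc, hci⟩, rfl⟩ hcC
    have h1 := h.le_norm_dual c hc fun hC => hcC ⟨c, ⟨hC, hci⟩, rfl⟩
    have hci' : c i = 0 := hci
    rwa [hammingNorm_succAbove i, if_neg (not_not_intro hci'), zero_add] at h1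

lemma IsCSSPair.exists_iterate [DecidableEq K] {n k a b : ℕ} (ha : 1 ≤ a)
    (hb : 1 ≤ b) (m : ℕ) {C E : Submodule K (Fin (n + 2 * m) → K)}
    (h : IsCSSPair k (a + m) (b + m) C E) :
    ∃ C' E' : Submodule K (Fin n → K), IsCSSPair k a b C' E' := by
  induction m with
  | zero => exact ⟨C, E, h⟩
  | succ m ih =>
    -- Puncture `C1`, exchange the two codes, puncture `C2`, and exchange back.
    have h1 : IsCSSPair (n := n + 2 * m + 1 + 1) k (a + m + 1) (b + m + 1) C E := h
    have h2 := (h1.puncture (by omega) 0).dual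
    exact ih (h2.puncture (by omega) 0).dual

end

/-- iterated form of Theorem 2: from a CSS pair `[[n,k,{d1,d2}]]_q` with
`d1, d2 > 1` and `m ≤ min(d1,d2) - 1`, one obtains a CSS pair of length `n - 2m` with
the same CSS dimension and relative distances at least `d1 - m` and `d2 - m`. -/
theorem css_iterated {n m k d1 d2 : ℕ} (C1 C2 : Submodule F (Fin n → F))
    (hmn : 2 * m ≤ n) (hcss : dualCode C2 ≤ C1)
    (hk : Module.finrank F ↥C1 + Module.finrank F ↥C2 - n = k)
    (hd1 : IsLeast (hammingNorm '' {v | v ∈ C1 ∧ v ∉ dualCode C2}) d1)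
    (hd2 : IsLeast (hammingNorm '' {v | v ∈ C2 ∧ v ∉ dualCode C1}) d2)
    (hd1' : 1 < d1) (hd2' : 1 < d2) (hm : m ≤ min d1 d2 - 1) :
    ∃ C1'' C2'' : Submodule F (Fin (n - 2 * m) → F),
      dualCode C2'' ≤ C1'' ∧
      Module.finrank F ↥C1'' + Module.finrank F ↥C2'' - (n - 2 * m) = k ∧
      (∀ v ∈ C1'', v ∉ dualCode C2'' → d1 - m ≤ hammingNorm v) ∧
      (∀ v ∈ C2'', v ∉ dualCode C1'' → d2 - m ≤ hammingNorm v) := by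
  have hnorm : ∀ v ∈ C1, v ∉ dualCode C2 → d1 ≤ hammingNorm v :=
    fun v hv hv' => hd1.2 ⟨v, ⟨hv, hv'⟩, rfl⟩
  have hnorm' : ∀ v ∈ C2, v ∉ dualCode C1 → d2 ≤ hammingNorm v :=
    fun v hv hv' => hd2.2 ⟨v, ⟨hv, hv'⟩, rfl⟩
  have hpair : IsCSSPair k (d1 - m + m) (d2 - m + m) C1 (dualCode C2) := by
    rw [Nat.sub_add_cancel (by omega), Nat.sub_add_cancel (by omega)]
    refine ⟨hcss, ?_, hnorm, by rwa [dualCode_dualCode]⟩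
    -- The inclusion `dualCode C2 ≤ C1` keeps the subtraction in `hk` from truncating.
    have h1 := finrank_dualCode C2
    have h2 := Submodule.finrank_mono hcss
    omega
  obtain ⟨r, hr⟩ : ∃ r, n - 2 * m = r := ⟨_, rfl⟩
  obtain rfl : n = r + 2 * m := by omega
  rw [hr]
  obtain ⟨C, E, h⟩ := hpair.exists_iterate (by omega) (by omega)
  refine ⟨C, dualCode E, ?_, ?_, ?_, h.le_norm_dual⟩
  · rw [dualCode_dualCode]
    exact h.le
  · have h1 := finrank_dualCode E
    have h2 := h.finrank_eq
    omega
  · rw [dualCode_dualCode]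
    exact h.le_norm
end
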